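/- Let X be a real symmetric m×m matrix with repeated eigenvalues λ_1 ≤ … ≤ λ_m and corresponding eigenprojections P_1, …, P_m of ranks d_i = tr P_i, so that X = Σ_{i=1}^m (λ_i/d_i) P_i. For j ∈ {1,…,m}, define j* := max{ i : λ_i = λ_j } and ℓ_k := Σ_{i=1}^k λ_i. Then the set Ξ_{j*} := { R : R symmetric, R² = R, tr R = j*, tr(RX) = ℓ_{j*} } is a singleton; namely Ξ_{j*} = { Σ_{i=1}^{j*} P_i / d_i }. -/

import Mathlib

open scoped Classical

/-!
The matrices `A i = P i / d i` are positive semidefinite, sum to `1` and satisfy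
`X * A i = lam i • A i`. Let `S` be the sum of those with `lam i ≤ t`. For every `R`,
`tr ((R - S) * (X - t))` equals the sum of `(t - lam i) * tr ((1 - R) * A i)` over `lam i ≤ t` and
of `(lam i - t) * tr (R * A i)` over `t < lam i`, and all these terms are nonnegative as soon as
`0 ≤ R ≤ 1`. If `R` and `S` have the same trace, alone and against `X`, the left side is `0`, so
`R * A i = 0` whenever `t < lam i`, that is `R = R * S`. Then `tr ((1 - R) * S) = tr S - tr R = 0`
forces `S = R * S = R`.
-/

/-- For a resolution `A` of the identity into eigenmatrices with eigenvalues `lam`, the spectral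
projection on the half-line `(-∞, t]`. -/
noncomputable def lowerSpectralSum {ι M : Type*} [Fintype ι] [AddCommMonoid M] (lam : ι → ℝ)
    (A : ι → M) (t : ℝ) : M :=
  ∑ i with lam i ≤ t, A i

section

open scoped ComplexOrder MatrixOrder

variable {𝕜 n ι : Type*} [RCLike 𝕜] [Fintype n]

section TraceMul

variable {A B : Matrix n n 𝕜}

theorem exists_trace_mul_eq_trace_conjTranspose_mul_self (hA : 0 ≤ A) (hB : 0 ≤ B) :
    ∃ C : Matrix n n 𝕜, (A * B).trace = (C.conjTranspose * C).trace ∧ (C = 0 → A * B = 0) := by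
  obtain ⟨D, rfl⟩ := CStarAlgebra.nonneg_iff_eq_star_mul_self.mp hA
  obtain ⟨E, rfl⟩ := CStarAlgebra.nonneg_iff_eq_star_mul_self.mp hB
  simp only [Matrix.star_eq_conjTranspose]
  refine ⟨D * E.conjTranspose, ?_, fun h => ?_⟩
  · rw [Matrix.conjTranspose_mul, Matrix.conjTranspose_conjTranspose, Matrix.mul_assoc,
      Matrix.mul_assoc, Matrix.trace_mul_comm E]
    simp only [Matrix.mul_assoc]
  · rw [Matrix.mul_assoc, ← Matrix.mul_assoc D, h, Matrix.zero_mul, Matrix.mul_zero]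

theorem trace_mul_nonneg (hA : 0 ≤ A) (hB : 0 ≤ B) : 0 ≤ (A * B).trace := by
  obtain ⟨C, hC, -⟩ := exists_trace_mul_eq_trace_conjTranspose_mul_self hA hB
  exact hC ▸ (Matrix.posSemidef_conjTranspose_mul_self C).trace_nonneg

theorem mul_eq_zero_of_trace_mul_eq_zero (hA : 0 ≤ A) (hB : 0 ≤ B) (h : (A * B).trace = 0) :
    A * B = 0 := by
  obtain ⟨C, hC, hzero⟩ := exists_trace_mul_eq_trace_conjTranspose_mul_self hA hB
  exact hzero (Matrix.trace_conjTranspose_mul_self_eq_zero_iff.mp (hC ▸ h))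

end TraceMul

variable [DecidableEq n]

theorem setOf_isStarProjection_subset_Icc :
    {R : Matrix n n 𝕜 | IsStarProjection R} ⊆ Set.Icc 0 1 :=
  fun _ hR => hR.mem_Icc

variable [Fintype ι]

/-- A resolution of the identity into positive semidefinite matrices `A i` whose columns lie in the
eigenspace of `X` for `lam i`. Eigenvalues may repeat and the `A i` need not be projections, so the
matrices `P i / d i` of a repeated eigenvalue list are included. -/
structure IsSpectralResolution (X : Matrix n n 𝕜) (lam : ι → ℝ) (A : ι → Matrix n n 𝕜) :
    Prop where
  nonneg (i : ι) : 0 ≤ A i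
  mul_eq_smul (i : ι) : X * A i = lam i • A i
  sum_eq_one : ∑ i, A i = 1

namespace IsSpectralResolution

variable {X R : Matrix n n 𝕜} {lam : ι → ℝ} {A : ι → Matrix n n 𝕜}

theorem of_smul {P : ι → Matrix n n 𝕜} {c : ι → ℝ} (hc : ∀ i, 0 ≤ c i)
    (hP : ∀ i, 0 ≤ P i) (hXP : ∀ i, X * P i = lam i • P i)
    (hsum : ∑ i, c i • P i = 1) : IsSpectralResolution X lam fun i => c i • P i where
  nonneg i := smul_nonneg (hc i) (hP i)
  mul_eq_smul i := by rw [Matrix.mul_smul, hXP, smul_comm]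
  sum_eq_one := hsum

theorem lowerSpectralSum_nonneg (h : IsSpectralResolution X lam A) (t : ℝ) :
    0 ≤ lowerSpectralSum lam A t :=
  Finset.sum_nonneg fun i _ => h.nonneg i

theorem eq_sum_smul (h : IsSpectralResolution X lam A) : X = ∑ i, lam i • A i := by
  simp only [← h.mul_eq_smul, ← Finset.mul_sum, h.sum_eq_one, mul_one]

theorem isSelfAdjoint (h : IsSpectralResolution X lam A) : IsSelfAdjoint X := by
  rw [h.eq_sum_smul]
  exact isSelfAdjoint_sum _ fun i _ => (IsSelfAdjoint.all (lam i)).smul (.of_nonneg (h.nonneg i))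

theorem mul_eq_zero_of_ne (h : IsSpectralResolution X lam A) {i k : ι} (hik : lam i ≠ lam k) :
    A i * A k = 0 := by
  have hAX : A i * X = lam i • A i := by
    simpa [(IsSelfAdjoint.of_nonneg (h.nonneg i)).star_eq, h.isSelfAdjoint.star_eq]
      using congrArg star (h.mul_eq_smul i)
  have hsmul : lam i • (A i * A k) = lam k • (A i * A k) := by
    rw [← Matrix.smul_mul, ← hAX, Matrix.mul_assoc, h.mul_eq_smul, Matrix.mul_smul]
  have hdiff : (lam i - lam k) • (A i * A k) = 0 := by rw [sub_smul, hsmul, sub_self]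
  exact (smul_eq_zero.mp hdiff).resolve_left (sub_ne_zero.mpr hik)

theorem one_sub_lowerSpectralSum (h : IsSpectralResolution X lam A) (t : ℝ) :
    1 - lowerSpectralSum lam A t = ∑ i with ¬ lam i ≤ t, A i := by
  rw [sub_eq_iff_eq_add', lowerSpectralSum, Finset.sum_filter_add_sum_filter_not, h.sum_eq_one]

theorem isStarProjection_lowerSpectralSum (h : IsSpectralResolution X lam A) (t : ℝ) :
    IsStarProjection (lowerSpectralSum lam A t) where
  isIdempotentElem := by
    have hcompl : lowerSpectralSum lam A t * (1 - lowerSpectralSum lam A t) = 0 := by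
      rw [h.one_sub_lowerSpectralSum, lowerSpectralSum, Finset.sum_mul_sum]
      refine Finset.sum_eq_zero fun i hi => Finset.sum_eq_zero fun k hk => h.mul_eq_zero_of_ne ?_
      exact ((Finset.mem_filter.mp hi).2.trans_lt (not_le.mp (Finset.mem_filter.mp hk).2)).ne
    rw [mul_sub, mul_one, sub_eq_zero] at hcompl
    exact hcompl.symm
  isSelfAdjoint := .of_nonneg (h.lowerSpectralSum_nonneg t)

theorem trace_lowerSpectralSum_mul (h : IsSpectralResolution X lam A) (t : ℝ) :
    (lowerSpectralSum lam A t * X).trace = ∑ i with lam i ≤ t, lam i • (A i).trace := by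
  simp only [Matrix.trace_mul_comm _ X, lowerSpectralSum, Finset.mul_sum, h.mul_eq_smul,
    Matrix.trace_sum, Matrix.trace_smul]

theorem sum_smul_trace_add_sum_smul_trace (h : IsSpectralResolution X lam A) (t : ℝ)
    (R : Matrix n n 𝕜) :
    ∑ i with lam i ≤ t, (t - lam i) • ((1 - R) * A i).trace
        + ∑ i with ¬ lam i ≤ t, (lam i - t) • (R * A i).trace
      = ((R * X).trace - (lowerSpectralSum lam A t * X).trace)
        - t • (R.trace - (lowerSpectralSum lam A t).trace) := by
  have hRX : (R * X).trace = ∑ i, lam i • (R * A i).trace := by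
    conv_lhs => rw [h.eq_sum_smul]
    simp only [Finset.mul_sum, Matrix.mul_smul, Matrix.trace_sum, Matrix.trace_smul]
  have hR : R.trace = ∑ i, (R * A i).trace := by
    rw [← Matrix.trace_sum, ← Finset.mul_sum, h.sum_eq_one, mul_one]
  rw [h.trace_lowerSpectralSum_mul, hRX, hR, lowerSpectralSum, Matrix.trace_sum,
    ← Finset.sum_filter_add_sum_filter_not Finset.univ (lam · ≤ t) fun i => lam i • _,
    ← Finset.sum_filter_add_sum_filter_not Finset.univ (lam · ≤ t) fun i => (R * A i).trace]
  simp only [Matrix.sub_mul, Matrix.one_mul, Matrix.trace_sub, sub_smul, smul_sub, smul_add,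
    Finset.sum_sub_distrib, Finset.smul_sum]
  abel

theorem mul_eq_zero_of_lt (h : IsSpectralResolution X lam A) {t : ℝ} (hR : R ∈ Set.Icc 0 1)
    (htr : R.trace = (lowerSpectralSum lam A t).trace)
    (htrX : (R * X).trace = (lowerSpectralSum lam A t * X).trace) {i : ι} (hi : t < lam i) :
    R * A i = 0 := by
  have hlow : 0 ≤ ∑ i with lam i ≤ t, (t - lam i) • ((1 - R) * A i).trace :=
    Finset.sum_nonneg fun i hi => smul_nonneg (sub_nonneg.mpr (Finset.mem_filter.mp hi).2)
      (trace_mul_nonneg (sub_nonneg.mpr hR.2) (h.nonneg i))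
  have hterm : ∀ i ∈ ({i | ¬ lam i ≤ t} : Finset ι), 0 ≤ (lam i - t) • (R * A i).trace :=
    fun i hi => smul_nonneg (sub_nonneg.mpr (not_le.mp (Finset.mem_filter.mp hi).2).le)
      (trace_mul_nonneg hR.1 (h.nonneg i))
  have hsum := h.sum_smul_trace_add_sum_smul_trace t R
  rw [htr, htrX, sub_self, sub_self, smul_zero, sub_zero,
    add_eq_zero_iff_of_nonneg hlow (Finset.sum_nonneg hterm)] at hsum
  have hzero : (lam i - t) • (R * A i).trace = 0 :=
    (Finset.sum_eq_zero_iff_of_nonneg hterm).mp hsum.2 i (by simpa using hi)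
  exact mul_eq_zero_of_trace_mul_eq_zero hR.1 (h.nonneg i)
    ((smul_eq_zero.mp hzero).resolve_left (sub_pos.mpr hi).ne')

theorem eq_lowerSpectralSum_of_mem_Icc (h : IsSpectralResolution X lam A) {t : ℝ}
    (hR : R ∈ Set.Icc 0 1) (htr : R.trace = (lowerSpectralSum lam A t).trace)
    (htrX : (R * X).trace = (lowerSpectralSum lam A t * X).trace) :
    R = lowerSpectralSum lam A t := by
  set S := lowerSpectralSum lam A t
  have hRS : R * S = R := by
    have hcompl : R * (1 - S) = 0 := by
      rw [h.one_sub_lowerSpectralSum, Finset.mul_sum]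
      exact Finset.sum_eq_zero fun i hi =>
        h.mul_eq_zero_of_lt hR htr htrX (not_le.mp (Finset.mem_filter.mp hi).2)
    rw [mul_sub, mul_one, sub_eq_zero] at hcompl
    exact hcompl.symm
  have hzero : (1 - R) * S = 0 :=
    mul_eq_zero_of_trace_mul_eq_zero (sub_nonneg.mpr hR.2) (h.lowerSpectralSum_nonneg t)
      (by rw [sub_mul, one_mul, hRS, Matrix.trace_sub, htr, sub_self])
  rw [sub_mul, one_mul, hRS, sub_eq_zero] at hzero
  exact hzero.symm

end IsSpectralResolution

-- `𝓕 = Set.Icc 0 1` is the convex relaxation of the problem over projections: with the trace fixed,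
-- it is the Fantope.
theorem kyfan_minimizer_singleton_general {X : Matrix n n 𝕜} {lam : ι → ℝ}
    {A : ι → Matrix n n 𝕜} (h : IsSpectralResolution X lam A) (t : ℝ) {𝓕 : Set (Matrix n n 𝕜)}
    (hproj : {R | IsStarProjection R} ⊆ 𝓕) (hIcc : 𝓕 ⊆ Set.Icc 0 1) :
    {R ∈ 𝓕 | R.trace = (lowerSpectralSum lam A t).trace ∧
        (R * X).trace = (lowerSpectralSum lam A t * X).trace}
      = {lowerSpectralSum lam A t} := by
  refine Set.eq_singleton_iff_unique_mem.mpr ⟨⟨?_, rfl, rfl⟩, ?_⟩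
  · exact hproj (h.isStarProjection_lowerSpectralSum t)
  · exact fun R ⟨hR, htr, htrX⟩ => h.eq_lowerSpectralSum_of_mem_Icc (hIcc hR) htr htrX

end

theorem isStarProjection_iff_isSymm_and_mul_self {n α : Type*} [Fintype n]
    [NonUnitalNonAssocSemiring α] [Star α] [TrivialStar α] {R : Matrix n n α} :
    IsStarProjection R ↔ R.IsSymm ∧ R * R = R := by
  rw [isStarProjection_iff, and_comm, IsSelfAdjoint, Matrix.star_eq_conjTranspose,
    Matrix.conjTranspose_eq_transpose_of_trivial]
  rfl

theorem filter_le_eq_Iic_of_monotone {ι α : Type*} [Fintype ι] [LinearOrder ι]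
    [LocallyFiniteOrderBot ι] [PartialOrder α] [DecidableLE α] {f : ι → α} (hf : Monotone f) {j : ι}
    (hj : ∀ i, f i = f j → i ≤ j) :
    ({i | f i ≤ f j} : Finset ι) = Finset.Iic j := by
  ext i
  simp only [Finset.mem_filter_univ, Finset.mem_Iic]
  refine ⟨fun hij => ?_, fun hij => hf hij⟩
  by_contra! hlt
  exact hlt.not_ge (hj i (hij.antisymm (hf hlt.le)))

theorem kyfan_minimizer_singleton {m : ℕ}
    (X : Matrix (Fin m) (Fin m) ℝ)
    (lam : Fin m → ℝ)
    (P : Fin m → Matrix (Fin m) (Fin m) ℝ)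
    (hX : X.IsSymm)
    (hmono : Monotone lam)
    (hPsymm : ∀ i, (P i).IsSymm)
    (hPidem : ∀ i, P i * P i = P i)
    (hXP : ∀ i, X * P i = lam i • P i)
    (htr : ∀ i, (P i).trace = ((Finset.univ.filter fun k => lam k = lam i).card : ℝ))
    (hPeq : ∀ i k, lam i = lam k → P i = P k)
    (hPorth : ∀ i k, lam i ≠ lam k → P i * P k = 0)
    (hcompl : ∑ i, ((Finset.univ.filter fun k => lam k = lam i).card : ℝ)⁻¹ • P i = 1)
    (j jstar : Fin m)
    (hjs : lam jstar = lam j ∧ ∀ i, lam i = lam j → i ≤ jstar) :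
    {R : Matrix (Fin m) (Fin m) ℝ | R.IsSymm ∧ R * R = R ∧
        R.trace = (((jstar : ℕ) : ℝ) + 1) ∧
        (R * X).trace = ∑ i ∈ Finset.Iic jstar, lam i}
      = {∑ i ∈ Finset.Iic jstar,
          ((Finset.univ.filter fun k => lam k = lam i).card : ℝ)⁻¹ • P i} := by
  have hP (i : Fin m) : IsStarProjection (P i) :=
    isStarProjection_iff_isSymm_and_mul_self.mpr ⟨hPsymm i, hPidem i⟩
  have hres := IsSpectralResolution.of_smul (fun i => inv_nonneg.mpr (Nat.cast_nonneg _))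
    (fun i => (setOf_isStarProjection_subset_Icc (hP i)).1) hXP hcompl
  set A := fun i => ((Finset.univ.filter fun k => lam k = lam i).card : ℝ)⁻¹ • P i
  have htrA (i : Fin m) : (A i).trace = 1 := by
    have hcard : (Finset.univ.filter fun k => lam k = lam i).card ≠ 0 :=
      Finset.card_ne_zero_of_mem (a := i) (by simp)
    rw [Matrix.trace_smul, htr, smul_eq_mul, inv_mul_cancel₀ (Nat.cast_ne_zero.mpr hcard)]
  have hIic : ({i | lam i ≤ lam jstar} : Finset (Fin m)) = Finset.Iic jstar :=
    filter_le_eq_Iic_of_monotone hmono fun i hi => hjs.2 i (hi.trans hjs.1)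
  have hset := kyfan_minimizer_singleton_general hres (lam jstar) subset_rfl
    setOf_isStarProjection_subset_Icc
  rw [hres.trace_lowerSpectralSum_mul] at hset
  simpa only [lowerSpectralSum, hIic, Matrix.trace_sum, htrA, Finset.sum_const, Fin.card_Iic,
    nsmul_eq_mul, mul_one, smul_eq_mul, Nat.cast_add, Nat.cast_one, Set.mem_ofPred_eq,
    isStarProjection_iff_isSymm_and_mul_self, and_assoc] using hset
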